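/- arXiv:2210.01639 — 2 statements merged into one kernel-verified Lean document; each statement's English description precedes it below -/
import Mathlib

section
/- Let a > 1 be a real number. Define g : ℝ → ℝ by g(λ) = log((a^λ − 1)/λ) for λ ≠ 0 and g(0) = log(log a). Then g is strictly convex on ℝ. In particular, λ ↦ log((a^λ − 1)/λ) is strictly convex on each of the intervals (−∞, 0) and (0, ∞). -/
/-!
With `L = log a`, the quantity `(a^λ − 1)/λ` is `∫ x in 0..L, exp (λ x)`, and its value at `λ = 0`
is `L`. So `g` is the cumulant generating function of the identity under Lebesgue measure on
`(0, L]`. The second derivative of a cumulant generating function at `λ` is the variance under the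
measure with density proportional to `exp (λ X)`, and this is positive as soon as `X` is not almost
everywhere constant.
-/

open MeasureTheory ProbabilityTheory Set

section CumulantGeneratingFunction

variable {Ω : Type*} {_ : MeasurableSpace Ω} {μ : Measure Ω} {X : Ω → ℝ}

lemma iteratedDeriv_two_cgf_pos {t : ℝ} (ht : t ∈ interior (integrableExpSet X μ))
    (hX : ∀ c, ¬ X =ᵐ[μ] fun _ ↦ c) : 0 < iteratedDeriv 2 (cgf X μ) t := by
  have hexp : t ∈ integrableExpSet X μ := interior_subset ht
  have hac : μ ≪ μ.tilted (t * X ·) := absolutelyContinuous_tilted hexp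
  rw [← variance_tilted_mul ht]
  refine (variance_nonneg _ _).lt_of_ne' fun hvar ↦ ?_
  exact hX _ (hac.ae_eq (ae_eq_integral_of_variance_eq_zero (memLp_tilted_mul ht 2) hvar))

lemma strictConvexOn_cgf (hX : ∀ c, ¬ X =ᵐ[μ] fun _ ↦ c) :
    StrictConvexOn ℝ (interior (integrableExpSet X μ)) (cgf X μ) := by
  refine strictConvexOn_of_deriv2_pos' convex_integrableExpSet.interior
    analyticOn_cgf.continuousOn fun t ht ↦ ?_
  rw [← iteratedDeriv_eq_iterate]
  exact iteratedDeriv_two_cgf_pos ht hX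

end CumulantGeneratingFunction

lemma not_id_ae_eq_const {α : Type*} [MeasurableSpace α] (μ : Measure α) [NullSingletonClass μ]
    [NeZero μ] (c : α) : ¬ id =ᵐ[μ] fun _ ↦ c := fun h ↦ by
  obtain ⟨x, hx, hxc⟩ := (h.and (Measure.ae_ne μ c)).exists
  exact hxc hx

lemma integrableExpSet_id_restrict_Ioc (μ : Measure ℝ) [IsLocallyFiniteMeasure μ] (u v : ℝ) :
    integrableExpSet id (μ.restrict (Ioc u v)) = univ :=
  eq_univ_of_forall fun t ↦
    (by fun_prop : Continuous fun x : ℝ ↦ Real.exp (t * id x)).integrableOn_Ioc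

lemma strictConvexOn_cgf_id_restrict_Ioc {μ : Measure ℝ} [IsLocallyFiniteMeasure μ]
    [NullSingletonClass μ] {u v : ℝ} (huv : μ (Ioc u v) ≠ 0) :
    StrictConvexOn ℝ univ (cgf id (μ.restrict (Ioc u v))) := by
  have : NeZero (μ.restrict (Ioc u v)) := ⟨Measure.restrict_eq_zero.not.mpr huv⟩
  simpa only [integrableExpSet_id_restrict_Ioc, interior_univ]
    using strictConvexOn_cgf (not_id_ae_eq_const (μ.restrict (Ioc u v)))

lemma mgf_id_volume_restrict_Ioc {u v : ℝ} (huv : u ≤ v) {t : ℝ} (ht : t ≠ 0) :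
    mgf id (volume.restrict (Ioc u v)) t = (Real.exp (t * v) - Real.exp (t * u)) / t := by
  calc mgf id (volume.restrict (Ioc u v)) t
      = ∫ x in u..v, Real.exp (t * x) := (intervalIntegral.integral_of_le huv).symm
    _ = t⁻¹ • ∫ x in t * u..t * v, Real.exp x :=
        intervalIntegral.integral_comp_mul_left (fun x ↦ Real.exp x) ht
    _ = (Real.exp (t * v) - Real.exp (t * u)) / t := by
        rw [integral_exp, smul_eq_mul, inv_mul_eq_div]

lemma mgf_id_volume_restrict_Ioc_zero_log {a : ℝ} (ha : 1 ≤ a) (l : ℝ) :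
    mgf id (volume.restrict (Ioc 0 (Real.log a))) l =
      if l = 0 then Real.log a else (a ^ l - 1) / l := by
  have hlog : 0 ≤ Real.log a := Real.log_nonneg ha
  split_ifs with hl
  · rw [hl, mgf_zero', measureReal_restrict_apply_univ, Real.volume_real_Ioc_of_le hlog, sub_zero]
  · rw [mgf_id_volume_restrict_Ioc hlog hl, mul_zero, Real.exp_zero, mul_comm,
      ← Real.rpow_def_of_pos (one_pos.trans_le ha)]

/-- For `a > 1`, the function `g(λ) = log((a^λ − 1)/λ)` (extended by `g(0) = log (log a)`)
is strictly convex on `ℝ`; in particular `λ ↦ log((a^λ − 1)/λ)` is strictly convex on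
`(−∞, 0)` and on `(0, ∞)`. -/
theorem strictConvexOn_log_boxcox_base (a : ℝ) (ha : 1 < a) :
    StrictConvexOn ℝ Set.univ
        (fun l : ℝ => if l = 0 then Real.log (Real.log a) else Real.log ((a ^ l - 1) / l)) ∧
      StrictConvexOn ℝ (Set.Iio (0 : ℝ)) (fun l : ℝ => Real.log ((a ^ l - 1) / l)) ∧
      StrictConvexOn ℝ (Set.Ioi (0 : ℝ)) (fun l : ℝ => Real.log ((a ^ l - 1) / l)) := by
  have hvol : volume (Ioc 0 (Real.log a)) ≠ 0 := by
    simpa using Real.log_pos ha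
  have hconv : StrictConvexOn ℝ univ
      (fun l : ℝ => if l = 0 then Real.log (Real.log a) else Real.log ((a ^ l - 1) / l)) :=
    (strictConvexOn_cgf_id_restrict_Ioc hvol).congr fun l _ ↦ by
      rw [cgf, mgf_id_volume_restrict_Ioc_zero_log ha.le, apply_ite Real.log]
  exact ⟨hconv,
    (hconv.subset (subset_univ _) (convex_Iio 0)).congr fun _ hl ↦ if_neg (ne_of_lt hl),
    (hconv.subset (subset_univ _) (convex_Ioi 0)).congr fun _ hl ↦ if_neg (ne_of_gt hl)⟩
end

section
/- For every fixed x ∈ ℝ, the function λ ↦ Ψ(λ, x) is differentiable on ℝ, and its derivative ∂_λΨ(λ, x) equals: [(x+1)^λ·(log(x+1)) − Ψ(λ, x)]/λ if x ≥ 0 and λ ≠ 0; (log(x+1))²/2 if x ≥ 0 and λ = 0; [(1−x)^{2−λ}·(log(1−x)) + Ψ(λ, x)]/(2−λ) if x < 0 and λ ≠ 2; (log(1−x))²/2 if x < 0 and λ = 2. -/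
/-- The Yeo-Johnson transformation. -/
noncomputable def yj (l x : ℝ) : ℝ :=
  if 0 ≤ x then
    if l ≠ 0 then ((x + 1) ^ l - 1) / l else Real.log (x + 1)
  else
    if l ≠ 2 then -(((1 - x) ^ (2 - l) - 1) / (2 - l)) else -Real.log (1 - x)

/-!
As a function of `λ`, the Box-Cox transform `(b ^ λ - 1) / λ`, with value `log b` at `λ = 0`, is
the slope at `0` of the exponential `λ ↦ b ^ λ`, continuously extended by its derivative. Away from
`0` the quotient rule applies; at `0` the second-order expansion of the exponential makes the
derivative half of its second derivative, `log b ^ 2 / 2`. The Yeo-Johnson transformation is the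
Box-Cox transform of `x + 1` at `λ` for `x ≥ 0`, and minus that of `1 - x` at `2 - λ` for `x < 0`.
-/

open Asymptotics Topology

section DSlope

theorem hasDerivAt_dslope_of_ne {𝕜 E : Type*} [NontriviallyNormedField 𝕜] [NormedAddCommGroup E]
    [NormedSpace 𝕜 E] {f : 𝕜 → E} {f' : E} {a b : 𝕜} (hf : HasDerivAt f f' b) (hb : b ≠ a) :
    HasDerivAt (dslope f a) ((b - a)⁻¹ • (f' - dslope f a b)) b := by
  have hba : b - a ≠ 0 := sub_ne_zero.2 hb
  have hslope : HasDerivAt (slope f a)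
      ((b - a)⁻¹ • f' + (-1 / (b - a) ^ 2) • (f b - f a)) b :=
    (((hasDerivAt_id b).sub_const a).fun_inv hba).smul (hf.sub_const (f a))
  refine (hslope.congr_of_eventuallyEq (dslope_eventuallyEq_slope_of_ne f hb)).congr_deriv ?_
  rw [← sub_smul_dslope f a b, smul_smul, smul_sub, sub_eq_add_neg _ (_ • dslope f a b),
    ← neg_smul]
  congr 2
  field_simp

variable {𝕜 E : Type*} [RCLike 𝕜] [NormedAddCommGroup E] [NormedSpace 𝕜 E]
  {f f' : 𝕜 → E} {f'' : E} {a : 𝕜}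

theorem isLittleO_sub_taylor_two (hf : ∀ᶠ x in 𝓝 a, HasDerivAt f (f' x) x)
    (hf' : HasDerivAt f' f'' a) :
    (fun x => f x - f a - (x - a) • f' a - ((x - a) ^ 2 / 2) • f'') =o[𝓝 a]
      fun x => (x - a) ^ 2 := by
  obtain ⟨r, hr, hball⟩ := Metric.eventually_nhds_iff_ball.1 hf
  set g : 𝕜 → E := fun x => f x - f a - (x - a) • f' a - ((x - a) ^ 2 / 2) • f''
  have hg (x : 𝕜) (hx : x ∈ Metric.ball a r) :
      HasDerivAt g (f' x - f' a - (x - a) • f'') x := by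
    have hlin : HasDerivAt (fun x => x - a) 1 x := (hasDerivAt_id x).sub_const a
    have hsq : HasDerivAt (fun x => (x - a) ^ 2 / 2) (x - a) x :=
      ((hlin.fun_pow 2).div_const 2).congr_deriv (by ring)
    simpa only [one_smul] using!
      (((hball x hx).sub_const (f a)).sub (hlin.smul_const (f' a))).sub (hsq.smul_const f'')
  have hg' : (fun x => ContinuousLinearMap.toSpanSingleton 𝕜 (f' x - f' a - (x - a) • f''))
        =o[𝓝[Metric.ball a r] a] fun x => ‖x - a‖ ^ 1 := by
    refine .of_norm_left ?_
    simpa only [pow_one, isLittleO_norm_right, ContinuousLinearMap.norm_toSpanSingleton]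
      using hf'.isLittleO.norm_left.mono nhdsWithin_le_nhds
  have hga : g a = 0 := by simp [g]
  -- By the mean value inequality, a remainder whose derivative is `o(x - a)` is `o((x - a) ^ 2)`.
  have hsucc := (convex_ball a r).isLittleO_pow_succ (Metric.mem_ball_self hr)
    (fun x hx => (hg x hx).hasFDerivAt.hasFDerivWithinAt) hg'
  rw [Metric.isOpen_ball.nhdsWithin_eq (Metric.mem_ball_self hr)] at hsucc
  simpa only [hga, sub_zero, ← norm_pow, isLittleO_norm_right] using hsucc

theorem hasDerivAt_dslope_same (hf : ∀ᶠ x in 𝓝 a, HasDerivAt f (f' x) x)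
    (hf' : HasDerivAt f' f'' a) :
    HasDerivAt (dslope f a) ((2⁻¹ : 𝕜) • f'') a := by
  have hderiv : deriv f a = f' a := hf.self_of_nhds.deriv
  have hmul := (isBigO_refl (fun x => (x - a)⁻¹) (𝓝 a)).smul_isLittleO
    (isLittleO_sub_taylor_two hf hf')
  refine .of_isLittleO (hmul.congr (fun x => ?_) fun x => ?_)
  · rcases eq_or_ne x a with rfl | hx
    · simp
    · have hxa : x - a ≠ 0 := sub_ne_zero.2 hx
      rw [← sub_smul_dslope f a x, dslope_same, hderiv, ← smul_sub, smul_sub,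
        inv_smul_smul₀ hxa, smul_smul, smul_smul]
      congr 2
      field_simp
  · rcases eq_or_ne x a with rfl | hx
    · simp
    · have hxa : x - a ≠ 0 := sub_ne_zero.2 hx
      rw [smul_eq_mul]
      field_simp

end DSlope

/-- The Box-Cox transform of `b` with parameter `l`, extended by continuity to `l = 0`. It is the
common building block of the two branches of `yj`. -/
noncomputable def boxCox (l b : ℝ) : ℝ :=
  if l ≠ 0 then (b ^ l - 1) / l else Real.log b

theorem boxCox_eq_dslope {b : ℝ} (hb : 0 < b) (l : ℝ) :
    boxCox l b = dslope (fun t : ℝ => b ^ t) 0 l := by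
  rcases eq_or_ne l 0 with rfl | hl
  · simp [boxCox, (Real.hasStrictDerivAt_const_rpow hb 0).hasDerivAt.deriv]
  · simp [boxCox, hl, dslope_of_ne, slope_def_field]

theorem hasDerivAt_boxCox {b : ℝ} (hb : 0 < b) (l : ℝ) :
    HasDerivAt (fun t => boxCox t b)
      (if l ≠ 0 then (b ^ l * Real.log b - boxCox l b) / l else Real.log b ^ 2 / 2) l := by
  have hpow (t : ℝ) : HasDerivAt (fun t : ℝ => b ^ t) (b ^ t * Real.log b) t :=
    (Real.hasStrictDerivAt_const_rpow hb t).hasDerivAt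
  simp only [boxCox_eq_dslope hb]
  split_ifs with hl
  · exact (hasDerivAt_dslope_of_ne (hpow l) hl).congr_deriv (by
      rw [sub_zero, smul_eq_mul, inv_mul_eq_div])
  · obtain rfl : l = 0 := not_not.1 hl
    have hpow' := (hpow 0).mul_const (Real.log b)
    refine (hasDerivAt_dslope_same (.of_forall hpow) hpow').congr_deriv ?_
    rw [Real.rpow_zero, smul_eq_mul]
    ring

theorem yj_of_nonneg {x : ℝ} (hx : 0 ≤ x) (l : ℝ) : yj l x = boxCox l (x + 1) :=
  if_pos hx

theorem yj_of_neg {x : ℝ} (hx : x < 0) (l : ℝ) : yj l x = -boxCox (2 - l) (1 - x) := by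
  simp only [yj, boxCox, if_neg hx.not_ge, sub_ne_zero, ne_comm (a := l), neg_ite]

/-- For fixed `x`, the map `λ ↦ Ψ(λ, x)` is differentiable and its derivative is given
by the stated piecewise formula. -/
theorem yj_hasDerivAt_lambda (x l : ℝ) :
    HasDerivAt (fun t => yj t x)
      (if 0 ≤ x then
        if l ≠ 0 then ((x + 1) ^ l * Real.log (x + 1) - yj l x) / l
        else Real.log (x + 1) ^ 2 / 2
      else
        if l ≠ 2 then ((1 - x) ^ (2 - l) * Real.log (1 - x) + yj l x) / (2 - l)
        else Real.log (1 - x) ^ 2 / 2) l := by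
  rcases le_or_gt 0 x with hx | hx
  · simpa only [yj_of_nonneg hx, if_pos hx] using hasDerivAt_boxCox (by linarith) l
  · have hreflect := ((hasDerivAt_boxCox (by linarith : 0 < 1 - x) (2 - l)).comp_const_sub 2 l).neg
    simpa only [yj_of_neg hx, if_neg hx.not_ge, neg_neg, sub_ne_zero, ne_comm (a := l),
      ← sub_eq_add_neg] using! hreflect
end
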